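/- Let κ be a field, r ≥ 1, and s = (s₁,…,s_d) a sequence of nonnegative integers with s₁+⋯+s_d = r. Let w ∈ S_{r,s}. If g ∈ GL_r(κ) lies in the double coset P_s a(w) B, i.e. g = p′ a(w) b for some p′ ∈ P_s and b ∈ B, then there exist unique p ∈ P_s and u ∈ U_w such that g = p · a(w) · u. -/

import Mathlib

/-!
Conjugating by `a(w)` turns the entry of `u` at `(i, j)` into the entry at `(w i, w j)`.

*Existence.* It suffices to find a matrix `c` with `c i j ≠ 0` only when `j ≤ i` and `w j ≤ w i`,
and such that `c * b ∈ U_w`: then `a(w) c a(w)⁻¹` is lower triangular, hence block lower triangular,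
and `g = (p' (a(w) c a(w)⁻¹)⁻¹) a(w) (c b)`. The row `i` of `c` is obtained by inverting the square
submatrix of `b` on the indices `{m | m ≤ i, w m ≤ w i}`, which is lower triangular with nonzero
diagonal (`exists_row`, `exists_left_factor`).

*Uniqueness.* Since `w ∈ S_{r,s}`, for `u ∈ U_w` the matrix `a(w) u a(w)⁻¹` is the identity plus a
strictly block upper triangular matrix. If `p₁ a(w) u₁ = p₂ a(w) u₂`, then `q = p₂⁻¹ p₁ ∈ P_s`
carries one such matrix to another, and comparing entries column block by column block gives `q = 1`
(`eq_one_of_mul_eq`), the uniqueness of the block LU decomposition.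

Block lower triangularity is expressed by `Matrix.BlockTriangular` for the function sending a row to
the label of its block; as labels decrease from top to bottom, the order matches the one in Mathlib.
-/

def blockStart {d : ℕ} (s : Fin d → ℕ) (b : Fin d) : ℕ :=
  ∑ j ∈ Finset.univ.filter (fun j => b < j), s j

def inBlock {d : ℕ} (s : Fin d → ℕ) (b : Fin d) (x : ℕ) : Prop :=
  blockStart s b ≤ x ∧ x < blockStart s b + s b

def sameBlock {d : ℕ} (s : Fin d → ℕ) (x y : ℕ) : Prop :=
  ∃ b, inBlock s b x ∧ inBlock s b y

/-- Membership in the parabolic subgroup `P_s ⊆ GL_r(κ)` of invertible block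
lower triangular matrices for the block sizes `(s_d, …, s₁)` (top to bottom). -/
def memP {κ : Type} [Field κ] {d n : ℕ} (s : Fin d → ℕ)
    (g : Matrix (Fin n) (Fin n) κ) : Prop :=
  IsUnit g ∧ ∀ b b' : Fin d, b' < b → ∀ i j : Fin n,
    inBlock s b i.val → inBlock s b' j.val → g i j = 0

/-- Membership in the Borel subgroup `B ⊆ GL_r(κ)` of invertible lower
triangular matrices. -/
def memB {κ : Type} [Field κ] {n : ℕ} (b : Matrix (Fin n) (Fin n) κ) : Prop :=
  IsUnit b ∧ ∀ i j : Fin n, i < j → b i j = 0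

/-- The permutation matrix `a(w)` with `a(w)_{ij} = δ_{i, w(j)}`. -/
def permMat (κ : Type) [Field κ] {r : ℕ} (w : Equiv.Perm (Fin r)) :
    Matrix (Fin r) (Fin r) κ :=
  Matrix.of fun i j => if i = w j then 1 else 0

/-- `w ∈ S_{r,s}`: for `i < j` in the same block (for the partition of
`{1,…,r}` into consecutive blocks of sizes `s_d, …, s₁`), `w⁻¹(i) < w⁻¹(j)`. -/
def memSrs {d r : ℕ} (s : Fin d → ℕ) (w : Equiv.Perm (Fin r)) : Prop :=
  ∀ i j : Fin r, sameBlock s i.val j.val → i < j → w.symm i < w.symm j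

/-- `u ∈ U_w`: unipotent matrices whose off-diagonal entries vanish except
possibly at positions `(i,j)` with `j < i` and `w(i) < w(j)`. -/
def memU {κ : Type} [Field κ] {r : ℕ} (w : Equiv.Perm (Fin r))
    (u : Matrix (Fin r) (Fin r) κ) : Prop :=
  (∀ i, u i i = 1) ∧ ∀ i j, i ≠ j → ¬(j < i ∧ w i < w j) → u i j = 0

lemma blockStart_add_le {d : ℕ} (s : Fin d → ℕ) {b' b : Fin d} (h : b' < b) :
    blockStart s b + s b ≤ blockStart s b' := by
  unfold blockStart
  rw [add_comm, ← Finset.sum_insert (by simp)]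
  apply Finset.sum_le_sum_of_subset
  intro x hx
  simp only [Finset.mem_insert, Finset.mem_filter, Finset.mem_univ, true_and] at hx ⊢
  rcases hx with rfl | hx
  · exact h
  · exact h.trans hx

lemma exists_inBlock {d : ℕ} (s : Fin d → ℕ) (x : ℕ) (hx : x < ∑ b, s b) :
    ∃ b, inBlock s b x := by
  by_contra! hno
  -- Without a block containing `x`, every block starts after `x`, starting from the block `0`
  -- at the bottom and moving up; but the top block starts at `0`.
  have key : ∀ n (hn : n < d), x < blockStart s ⟨n, hn⟩ := by
    intro n
    induction n with
    | zero =>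
      intro hn
      by_contra! hle
      apply hno ⟨0, hn⟩
      refine ⟨hle, ?_⟩
      unfold blockStart
      rw [add_comm, ← Finset.sum_insert (by simp)]
      convert hx using 2
      ext y
      simp only [Finset.mem_insert, Finset.mem_filter, Finset.mem_univ, true_and, iff_true,
        Fin.lt_def, Fin.ext_iff]
      omega
    | succ n ih =>
      intro hn
      by_contra! hle
      apply hno ⟨n + 1, hn⟩
      refine ⟨hle, ?_⟩
      refine (ih (by omega)).trans_le (le_of_eq ?_)
      unfold blockStart
      rw [add_comm, ← Finset.sum_insert (by simp)]
      congr 1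
      ext y
      simp only [Finset.mem_insert, Finset.mem_filter, Finset.mem_univ, true_and,
        Fin.lt_def, Fin.ext_iff]
      omega
  rcases d with _ | d
  · simp at hx
  · have := key d (by omega)
    unfold blockStart at this
    rw [Finset.filter_false_of_mem] at this
    · simp at this
    · intro y _ hy
      simp only [Fin.lt_def] at hy
      omega

lemma inBlock_unique {d : ℕ} (s : Fin d → ℕ) {b b' : Fin d} {x : ℕ}
    (h : inBlock s b x) (h' : inBlock s b' x) : b = b' := by
  obtain ⟨h1, h2⟩ := h
  obtain ⟨h3, h4⟩ := h'
  rcases lt_trichotomy b b' with hlt | heq | hlt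
  · have := blockStart_add_le s hlt; omega
  · exact heq
  · have := blockStart_add_le s hlt; omega

lemma memP_iff {κ : Type} [Field κ] {r d : ℕ} (s : Fin d → ℕ) (β : Fin r → Fin d)
    (hβ : ∀ i, inBlock s (β i) i.val) (g : Matrix (Fin r) (Fin r) κ) :
    memP s g ↔ IsUnit g ∧ g.BlockTriangular β := by
  refine and_congr_right fun _ => ⟨fun h i j hij => h _ _ hij i j (hβ i) (hβ j), ?_⟩
  intro h b b' hb i j hi hj
  apply h
  rwa [inBlock_unique s (hβ i) hi, inBlock_unique s (hβ j) hj]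

lemma permMat_mul {κ : Type} [Field κ] {r : ℕ} (w : Equiv.Perm (Fin r))
    (x : Matrix (Fin r) (Fin r) κ) :
    permMat κ w * x = x.submatrix w.symm w.symm * permMat κ w := by
  ext k j
  have hk : ∀ m, (k = w m) ↔ (m = w.symm k) := fun m => by
    rw [Equiv.eq_symm_apply, eq_comm]
  simp [permMat, Matrix.mul_apply, hk]

lemma permMat_isUnit {κ : Type} [Field κ] {r : ℕ} (w : Equiv.Perm (Fin r)) :
    IsUnit (permMat κ w) := by
  apply IsUnit.of_mul_eq_one (permMat κ w.symm)
  ext i j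
  simp [permMat, Matrix.mul_apply, Matrix.one_apply]

lemma isUnit_of_lower {κ : Type} [Field κ] {r : ℕ} (x : Matrix (Fin r) (Fin r) κ)
    (hx : ∀ i j, i < j → x i j = 0) (hd : ∀ i, x i i ≠ 0) : IsUnit x := by
  rw [Matrix.isUnit_iff_isUnit_det,
    Matrix.det_of_isLowerTriangular x (fun i j hij => hx i j hij), isUnit_iff_ne_zero]
  exact Finset.prod_ne_zero_iff.mpr fun i _ => hd i

/-- For an index set `S` containing `i`, some row vector `x` supported on `S` is such that `x * b`
agrees with the `i`-th unit vector on `S`: the submatrix of `b` on `S` is invertible, being lower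
triangular with nonzero diagonal. -/
lemma exists_row {κ : Type} [Field κ] {r : ℕ} (b : Matrix (Fin r) (Fin r) κ)
    (hb : ∀ i j, i < j → b i j = 0) (hd : ∀ i, b i i ≠ 0) (S : Fin r → Prop) (i : Fin r)
    (hi : S i) :
    ∃ x : Fin r → κ, (∀ m, ¬ S m → x m = 0) ∧
      ∀ l, S l → ∑ m, x m * b m l = if i = l then 1 else 0 := by
  classical
  -- Extending the submatrix by the identity outside of `S` keeps the index type `Fin r`.
  let t : Matrix (Fin r) (Fin r) κ := Matrix.of fun k l =>
    if S k ∧ S l then b k l else if k = l then 1 else 0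
  have ht : IsUnit t := by
    apply isUnit_of_lower
    · intro k l hkl
      simp only [t, Matrix.of_apply]
      split_ifs with h1 h2
      · exact hb _ _ hkl
      · exact absurd h2 hkl.ne
      · rfl
    · intro k
      simp only [t, Matrix.of_apply]
      split_ifs with h1
      · exact hd _
      · simp
  have hinv : t⁻¹ * t = 1 := Matrix.nonsing_inv_mul t ((Matrix.isUnit_iff_isUnit_det t).mp ht)
  have hent : ∀ l, ∑ m, t⁻¹ i m * t m l = if i = l then 1 else 0 := fun l => by
    rw [← Matrix.mul_apply, hinv, Matrix.one_apply]
  have hsupp : ∀ m, ¬ S m → t⁻¹ i m = 0 := by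
    intro m hm
    have h := hent m
    have hne : i ≠ m := by rintro rfl; exact hm hi
    simpa [t, hm, hne] using h
  refine ⟨fun m => t⁻¹ i m, hsupp, fun l hl => ?_⟩
  rw [← hent l]
  refine Finset.sum_congr rfl fun m _ => ?_
  by_cases hm : S m
  · simp [t, hm, hl]
  · simp [hsupp m hm]

/-- The factorization `B = (B ∩ a(w)⁻¹ B a(w)) U_w`, with the first factor moved to the left
hand side; of that factor only the lower triangularity of its conjugate by `a(w)` is recorded. -/
lemma exists_left_factor {κ : Type} [Field κ] {r : ℕ} (w : Equiv.Perm (Fin r))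
    (b : Matrix (Fin r) (Fin r) κ)
    (hb : ∀ i j, i < j → b i j = 0) (hd : ∀ i, b i i ≠ 0) :
    ∃ c : Matrix (Fin r) (Fin r) κ, (∀ i j, w i < w j → c i j = 0) ∧ memU w (c * b) := by
  choose c hc1 hc2 using fun i => exists_row b hb hd (fun m => m ≤ i ∧ w m ≤ w i) i
    ⟨le_rfl, le_rfl⟩
  refine ⟨Matrix.of c, fun i j hij => hc1 i j fun h => absurd h.2 hij.not_ge, fun i => ?_,
    fun i j hij hn => ?_⟩
  · rw [Matrix.mul_apply]
    simpa using hc2 i i ⟨le_rfl, le_rfl⟩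
  · rw [Matrix.mul_apply]
    by_cases hji : j ≤ i
    · have hwj : w j ≤ w i := by
        by_contra! h
        exact hn ⟨lt_of_le_of_ne hji hij.symm, h⟩
      simpa [hij] using hc2 i j ⟨hji, hwj⟩
    · apply Finset.sum_eq_zero
      intro m _
      by_cases hm : m ≤ i
      · rw [hb m j (by order), mul_zero]
      · rw [Matrix.of_apply, hc1 i m (fun h => hm h.1), zero_mul]

/-- Uniqueness of the block LU decomposition: labels decrease from top to bottom, so `q` is block
lower triangular, and `v₁`, `v₂` differ from `1` by strictly block upper triangular matrices. -/
lemma eq_one_of_mul_eq {κ : Type} [Field κ] {r d : ℕ} (β : Fin r → Fin d)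
    (q v₁ v₂ : Matrix (Fin r) (Fin r) κ) (hq : q.BlockTriangular β)
    (h₁ : ∀ k l, ¬ β l < β k → v₁ k l = if k = l then 1 else 0)
    (h₂ : ∀ k l, ¬ β l < β k → v₂ k l = if k = l then 1 else 0)
    (h : q * v₁ = v₂) : q = 1 := by
  -- Induction on the column block, from left to right.
  have key : ∀ c : Fin d, ∀ l, β l = c → ∀ k, q k l = if k = l then 1 else 0 := by
    intro c
    induction c using WellFoundedGT.induction with
    | ind c ih =>
      intro l hl k
      by_cases hkl : β l < β k
      · rw [hq hkl, if_neg]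
        rintro rfl
        exact lt_irrefl _ hkl
      · rw [← h₂ k l hkl, ← h, Matrix.mul_apply, Finset.sum_eq_single l]
        · simp [h₁ l l (lt_irrefl _)]
        · intro m _ hml
          by_cases hm : β l < β m
          · have hkm : k ≠ m := by
              rintro rfl
              exact hkl hm
            rw [ih (β m) (hl ▸ hm) m rfl k, if_neg hkm, zero_mul]
          · rw [h₁ m l hm, if_neg hml, mul_zero]
        · simp
  ext k l
  rw [key _ l rfl k, Matrix.one_apply]

/-- For `w ∈ S_{r,s}`, the conjugate of `U_w` by `a(w)` consists of block unipotent upper triangular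
matrices. -/
lemma conj_memU {κ : Type} [Field κ] {r d : ℕ} (s : Fin d → ℕ) (β : Fin r → Fin d)
    (hβ : ∀ i, inBlock s (β i) i.val) (w : Equiv.Perm (Fin r)) (hw : memSrs s w)
    (u : Matrix (Fin r) (Fin r) κ) (hu : memU w u) (k l : Fin r) (hkl : ¬ β l < β k) :
    u.submatrix w.symm w.symm k l = if k = l then 1 else 0 := by
  rw [Matrix.submatrix_apply]
  split_ifs with h
  · rw [h, hu.1]
  · apply hu.2 _ _ (fun h' => h (w.symm.injective h'))
    rintro ⟨h1, h2⟩
    rw [Equiv.apply_symm_apply, Equiv.apply_symm_apply] at h2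
    rcases (not_lt.mp hkl).eq_or_lt with heq | hlt
    · have := hw k l ⟨β k, hβ k, heq ▸ hβ l⟩ h2
      exact absurd h1 this.not_gt
    · have h3 := blockStart_add_le s hlt
      have h4 := (hβ l).2
      have h5 := (hβ k).1
      rw [Fin.lt_def] at h2
      omega

/-- Any element `g` of the double coset `P_s a(w) B` can be written uniquely as
`p · a(w) · u` with `p ∈ P_s` and `u ∈ U_w`. -/
theorem stmt1 {κ : Type} [Field κ] {r d : ℕ} (hr : 0 < r)
    (s : Fin d → ℕ) (hs : ∑ b, s b = r)
    (w : Equiv.Perm (Fin r)) (hw : memSrs s w)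
    (g p' b : Matrix (Fin r) (Fin r) κ) (hp' : memP s p') (hb : memB b)
    (hg : g = p' * permMat κ w * b) :
    ∃! pu : Matrix (Fin r) (Fin r) κ × Matrix (Fin r) (Fin r) κ,
      memP s pu.1 ∧ memU w pu.2 ∧ g = pu.1 * permMat κ w * pu.2 := by
  choose β hβ using fun i : Fin r => exists_inBlock s i.val (hs ▸ i.isLt)
  simp only [memP_iff s β hβ] at hp' ⊢
  have inv_tri : ∀ x : Matrix (Fin r) (Fin r) κ, IsUnit x → x.BlockTriangular β →
      x⁻¹.BlockTriangular β := fun x hx hxt => by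
    have := hx.invertible
    exact Matrix.blockTriangular_inv_of_blockTriangular hxt
  have inv_mul : ∀ x : Matrix (Fin r) (Fin r) κ, IsUnit x → x⁻¹ * x = 1 := fun x hx =>
    Matrix.nonsing_inv_mul x ((Matrix.isUnit_iff_isUnit_det x).mp hx)
  apply existsUnique_of_exists_of_unique
  · have hd : ∀ i, b i i ≠ 0 := by
      have h := (Matrix.isUnit_iff_isUnit_det b).mp hb.1
      rw [Matrix.det_of_isLowerTriangular b (fun i j hij => hb.2 i j hij), isUnit_iff_ne_zero,
        Finset.prod_ne_zero_iff] at h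
      exact fun i => h i (Finset.mem_univ i)
    obtain ⟨c, hc, hu⟩ := exists_left_factor w b hb.2 hd
    have hcu : IsUnit c := by
      have h : IsUnit (c * b) := by
        apply isUnit_of_lower
        · exact fun i j hij => hu.2 i j hij.ne fun h => absurd h.1 hij.not_gt
        · intro i
          rw [hu.1]
          exact one_ne_zero
      rw [Matrix.isUnit_iff_isUnit_det, Matrix.det_mul] at h
      exact (Matrix.isUnit_iff_isUnit_det c).mpr (isUnit_of_mul_isUnit_left h)
    let C := c.submatrix w.symm w.symm
    have hC : IsUnit C := by
      rw [Matrix.isUnit_iff_isUnit_det, Matrix.det_submatrix_equiv_self]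
      exact (Matrix.isUnit_iff_isUnit_det c).mp hcu
    have hCt : C.BlockTriangular β := by
      intro i j hij
      apply hc
      rw [Equiv.apply_symm_apply, Equiv.apply_symm_apply, Fin.lt_def]
      have h3 := blockStart_add_le s hij
      have h4 := (hβ i).2
      have h5 := (hβ j).1
      omega
    refine ⟨(p' * C⁻¹, c * b), ⟨hp'.1.mul ?_, hp'.2.mul (inv_tri C hC hCt)⟩, hu, ?_⟩
    · exact Matrix.isUnit_nonsing_inv_iff.mpr hC
    · calc g = p' * permMat κ w * b := hg
        _ = p' * ((C⁻¹ * C) * permMat κ w) * b := by rw [inv_mul C hC, one_mul]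
        _ = p' * (C⁻¹ * (permMat κ w * c)) * b := by rw [permMat_mul w c, Matrix.mul_assoc C⁻¹]
        _ = p' * C⁻¹ * permMat κ w * (c * b) := by simp only [Matrix.mul_assoc]
  · rintro ⟨p₁, u₁⟩ ⟨p₂, u₂⟩ ⟨⟨hp₁, ht₁⟩, hu₁, hg₁⟩ ⟨⟨hp₂, ht₂⟩, hu₂, hg₂⟩
    simp only at hp₁ ht₁ hu₁ hg₁ hp₂ ht₂ hu₂ hg₂
    have hpw : p₁ * u₁.submatrix w.symm w.symm = p₂ * u₂.submatrix w.symm w.symm := by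
      apply (permMat_isUnit (κ := κ) w).mul_right_cancel
      rw [Matrix.mul_assoc, Matrix.mul_assoc, ← permMat_mul, ← permMat_mul, ← Matrix.mul_assoc,
        ← Matrix.mul_assoc, ← hg₁, ← hg₂]
    have hq : p₂⁻¹ * p₁ = 1 := by
      refine eq_one_of_mul_eq β _ _ _ ((inv_tri p₂ hp₂ ht₂).mul ht₁)
        (conj_memU s β hβ w hw u₁ hu₁) (conj_memU s β hβ w hw u₂ hu₂) ?_
      rw [Matrix.mul_assoc, hpw, ← Matrix.mul_assoc, inv_mul p₂ hp₂, Matrix.one_mul]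
    have hp : p₁ = p₂ := by
      apply (Matrix.isUnit_nonsing_inv_iff.mpr hp₂).mul_left_cancel
      rw [hq, inv_mul p₂ hp₂]
    subst hp
    refine Prod.ext rfl ?_
    exact (hp₁.mul (permMat_isUnit w)).mul_left_cancel (hg₁.symm.trans hg₂)
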